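/- arXiv:0801.1742 — 5 statements merged into one kernel-verified Lean document; each statement's English description precedes it below -/
import Mathlib

section
/- The bracket defined on the standard basis of ℝ^{4n} by the 4n-parametric family of structure equations (brackets nonzero only inside each 4-dimensional block, with coefficients λ) satisfies the Jacobi identity [[x,y],z] + [[y,z],x] + [[z,x],y] = 0 for all x, y, z, and hence makes ℝ^{4n} a Lie algebra. -/
noncomputable section

/-- The signature of the basis vectors inside each block: `(+, +, -, -)`. -/
def sgn : Fin 4 → ℝ := ![1, 1, -1, -1]

/-- Structure constants of the bracket inside one block, depending on the four
parameters `l 0 = λ_1̄`, `l 1 = λ_2̄`, `l 2 = λ_3̄`, `l 3 = λ_4̄`: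
`sc l r s` is the coordinate vector of `[X_r, X_s]`. -/
def sc (l : Fin 4 → ℝ) : Fin 4 → Fin 4 → Fin 4 → ℝ :=
  ![![![0, 0, 0, 0], ![0, 0, l 1, -l 0], ![0, l 1, 0, l 3], ![0, -l 0, -l 3, 0]],
    ![![0, 0, -l 1, l 0], ![0, 0, 0, 0], ![-l 1, 0, 0, -l 2], ![l 0, 0, l 2, 0]],
    ![![0, -l 1, 0, -l 3], ![l 1, 0, 0, l 2], ![0, 0, 0, 0], ![-l 3, l 2, 0, 0]],
    ![![0, l 0, l 3, 0], ![-l 0, 0, -l 2, 0], ![l 3, -l 2, 0, 0], ![0, 0, 0, 0]]]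

/-- `V n = ℝ^{4n}`, with coordinates indexed by a block `α : Fin n` and an
offset `r : Fin 4` (offset `r` corresponds to the basis vector `X_{4α+r+1}`,
i.e. `r = 0,1,2,3` correspond to `1̄,2̄,3̄,4̄`). -/
abbrev V (n : ℕ) : Type := Fin n × Fin 4 → ℝ

/-- The `4n`-parametric family of brackets on `ℝ^{4n}`: bilinear, vanishing on
pairs of basis vectors from different blocks, and given inside each block `α`
by the structure constants `sc` with parameters `λ_{4α+1},…,λ_{4α+4}`. -/
def brk {n : ℕ} (lam : Fin n × Fin 4 → ℝ) (x y : V n) : V n := fun p =>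
  ∑ r : Fin 4, ∑ s : Fin 4,
    x (p.1, r) * y (p.1, s) * sc (fun t => lam (p.1, t)) r s p.2

/-- The standard basis vectors `X_i` of `ℝ^{4n}`. -/
def X {n : ℕ} (i : Fin n × Fin 4) : V n := fun j => if j = i then 1 else 0

/-- The Norden metric `g`: the standard basis is orthogonal with
`g(X_1̄,X_1̄) = g(X_2̄,X_2̄) = 1`, `g(X_3̄,X_3̄) = g(X_4̄,X_4̄) = -1` in each block. -/
def gf {n : ℕ} (x y : V n) : ℝ := ∑ p : Fin n × Fin 4, sgn p.2 * x p * y p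

/-- The almost complex structure `J`: `J X_1̄ = X_3̄`, `J X_2̄ = X_4̄`,
`J X_3̄ = -X_1̄`, `J X_4̄ = -X_2̄` in each block. -/
def Jm {n : ℕ} (x : V n) : V n := fun p =>
  ![-x (p.1, 2), -x (p.1, 3), x (p.1, 0), x (p.1, 1)] p.2

/-!
Each four-dimensional block carries the ternary vector product of a metric of signature
`(+, +, -, -)`, in which one argument has been frozen at the vector
`m = -(λ_3̄, λ_4̄, λ_1̄, λ_2̄)`: up to raising the index with the metric, `[x, y]` is the linear
form `w ↦ det (w, x, y, m)`. Right multiplication by `z` is then a metric-skew, hence traceless,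
map `A`, so `A` is an infinitesimal symmetry of the determinant as well as of the metric, and
therefore a derivation of the ternary product (Filippov's fundamental identity). Since `A m = 0`,
it is a derivation of the bracket, which is the Jacobi identity.
-/

open Matrix

section VecCons

variable {R M N : Type*} [CommRing R] [AddCommMonoid M] [Module R M] [AddCommMonoid N] [Module R N]
  {k : ℕ}

/-- An alternating map as a linear map in its first argument, the others being fixed to `u`.
Mathlib's `AlternatingMap.curryLeft` keeps `u` variable instead. -/
def vecConsLinearMap (f : M [⋀^Fin (k + 1)]→ₗ[R] N) (u : Fin k → M) : M →ₗ[R] N where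
  toFun w := f (vecCons w u)
  map_add' := f.map_vecCons_add u
  map_smul' := f.map_vecCons_smul u

theorem alternatingMap_vecCons_eq_sum {ι : Type*} [Fintype ι] [DecidableEq ι]
    (f : (ι → R) [⋀^Fin (k + 1)]→ₗ[R] N) (w : ι → R) (u : Fin k → ι → R) :
    f (vecCons w u) = ∑ j, w j • f (vecCons (Pi.single j 1) u) := by
  change vecConsLinearMap f u w = ∑ j, w j • vecConsLinearMap f u (Pi.single j 1)
  conv_lhs => rw [pi_eq_sum_univ' w, map_sum]
  simp only [map_smul]

theorem alternatingMap_vecCons_vecCons_swap {N : Type*} [AddCommGroup N] [Module R N]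
    (f : M [⋀^Fin (k + 2)]→ₗ[R] N) (x y : M) (u : Fin k → M) :
    f (vecCons x (vecCons y u)) = -f (vecCons y (vecCons x u)) := by
  rw [← f.map_swap _ (zero_ne_one : (0 : Fin (k + 2)) ≠ 1), cons_cons_comp_swap_zero_one]

end VecCons

section Determinant

variable {R : Type*} [CommRing R]

theorem detRowAlternating_vecCons_single {k : ℕ} (v : Fin k → Fin (k + 1) → R) (i : Fin (k + 1)) :
    detRowAlternating (vecCons (Pi.single i 1) v) =
      (-1) ^ (i : ℕ) * ((of v).submatrix id i.succAbove).det := by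
  change det (of (vecCons (Pi.single i 1) v)) = _
  rw [det_succ_row_zero, Finset.sum_eq_single i]
  · simp only [of_apply, cons_val_zero, Pi.single_eq_same, mul_one]
    rfl
  · intro j _ hj
    simp [hj]
  · simp

-- The derivative at `t = 0` of `det ((1 + t f) v) = det (1 + t f) * det v`.
theorem sum_detRowAlternating_update {ι : Type*} [Fintype ι] [DecidableEq ι]
    (f : (ι → R) →ₗ[R] (ι → R)) (v : ι → ι → R) :
    ∑ i, detRowAlternating (Function.update v i (f (v i))) =
      LinearMap.trace R (ι → R) f * detRowAlternating v := by
  set F := LinearMap.toMatrix' f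
  have det_update (i : ι) : detRowAlternating (Function.update v i (f (v i))) =
      (adjugate (of v)ᵀ * (F * (of v)ᵀ)) i i := by
    change ((of v).updateRow i (f (v i))).det = _
    rw [← cramer_transpose_apply, cramer_eq_adjugate_mulVec, ← LinearMap.toMatrix'_mulVec f]
    rfl
  calc ∑ i, detRowAlternating (Function.update v i (f (v i)))
      = trace (adjugate (of v)ᵀ * (F * (of v)ᵀ)) := Finset.sum_congr rfl fun i _ => det_update i
    _ = trace (F * ((of v)ᵀ * adjugate (of v)ᵀ)) := by rw [trace_mul_comm, Matrix.mul_assoc]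
    _ = trace F * (of v).det := by
        rw [mul_adjugate, det_transpose, Matrix.mul_smul, Matrix.mul_one, trace_smul,
          smul_eq_mul, mul_comm]
    _ = LinearMap.trace R (ι → R) f * detRowAlternating v := by
        rw [LinearMap.trace_eq_matrix_trace R (Pi.basisFun R ι), LinearMap.toMatrix_eq_toMatrix']
        rfl

end Determinant

section VectorProduct

variable {R : Type*} [CommRing R] {k : ℕ}

/-- The `k`-ary vector product on `R ^ (k + 1)`: the linear form `w ↦ det (w, v₁, …, v_k)`, turned
into a vector by the diagonal matrix with entries `d`, which plays the role of the inverse of the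
metric. -/
def vectorProduct (d : Fin (k + 1) → R) :
    (Fin (k + 1) → R) [⋀^Fin k]→ₗ[R] (Fin (k + 1) → R) :=
  AlternatingMap.pi fun i => d i • detRowAlternating.curryLeft (Pi.single i 1)

theorem vectorProduct_apply (d : Fin (k + 1) → R) (v : Fin k → Fin (k + 1) → R)
    (i : Fin (k + 1)) :
    vectorProduct d v i = d i * detRowAlternating (vecCons (Pi.single i 1) v) :=
  rfl

/-- The inner derivation of the vector product attached to `u`: the endomorphism
`w ↦ [w, u₁, …, u_k]`. -/
def vectorProductAd (d : Fin (k + 2) → R) (u : Fin k → Fin (k + 2) → R) :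
    (Fin (k + 2) → R) →ₗ[R] (Fin (k + 2) → R) :=
  vecConsLinearMap (vectorProduct d) u

theorem vectorProductAd_apply (d : Fin (k + 2) → R) (u : Fin k → Fin (k + 2) → R)
    (w : Fin (k + 2) → R) : vectorProductAd d u w = vectorProduct d (vecCons w u) :=
  rfl

theorem trace_vectorProductAd (d : Fin (k + 2) → R) (u : Fin k → Fin (k + 2) → R) :
    LinearMap.trace R (Fin (k + 2) → R) (vectorProductAd d u) = 0 := by
  rw [LinearMap.trace_eq_matrix_trace R (Pi.basisFun R _), LinearMap.toMatrix_eq_toMatrix']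
  refine Finset.sum_eq_zero fun i _ => ?_
  have det_eq_zero :
      detRowAlternating (vecCons (Pi.single i (1 : R)) (vecCons (Pi.single i 1) u)) = 0 :=
    detRowAlternating.map_eq_zero_of_eq _ (i := 0) (j := 1) rfl zero_ne_one
  rw [diag_apply, LinearMap.toMatrix'_apply, vectorProductAd_apply, vectorProduct_apply,
    det_eq_zero, mul_zero]

-- Skewness of `vectorProductAd d u` with respect to the metric, after clearing the inverse of `d`.
theorem vectorProductAd_vectorProduct_apply (d : Fin (k + 2) → R)
    (u : Fin k → Fin (k + 2) → R) (v : Fin (k + 1) → Fin (k + 2) → R) (i : Fin (k + 2)) :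
    vectorProductAd d u (vectorProduct d v) i =
      -(d i * detRowAlternating (vecCons (vectorProductAd d u (Pi.single i 1)) v)) := by
  rw [vectorProductAd_apply, vectorProduct_apply, alternatingMap_vecCons_vecCons_swap,
    alternatingMap_vecCons_eq_sum _ (vectorProduct d v),
    alternatingMap_vecCons_eq_sum _ (vectorProductAd d u _), mul_neg]
  congr 2
  refine Finset.sum_congr rfl fun j _ => ?_
  rw [vectorProductAd_apply, vectorProduct_apply, vectorProduct_apply, smul_eq_mul, smul_eq_mul]
  ring

theorem vectorProductAd_vectorProduct (d : Fin (k + 2) → R) (u : Fin k → Fin (k + 2) → R)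
    (v : Fin (k + 1) → Fin (k + 2) → R) :
    vectorProductAd d u (vectorProduct d v) =
      ∑ j, vectorProduct d (Function.update v j (vectorProductAd d u (v j))) := by
  ext i
  set A := vectorProductAd d u
  set e : Fin (k + 2) → R := Pi.single i 1
  have det_invariant : detRowAlternating (vecCons (A e) v) +
      ∑ j, detRowAlternating (vecCons e (Function.update v j (A (v j)))) = 0 := by
    have sum_update := sum_detRowAlternating_update A (vecCons e v)
    rw [trace_vectorProductAd, zero_mul, Fin.sum_univ_succ] at sum_update
    simpa only [vecCons, Fin.cons_zero, Fin.cons_succ, Fin.update_cons_zero, ← Fin.cons_update]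
      using sum_update
  calc A (vectorProduct d v) i = d i * -detRowAlternating (vecCons (A e) v) := by
        rw [vectorProductAd_vectorProduct_apply, mul_neg]
    _ = d i * ∑ j, detRowAlternating (vecCons e (Function.update v j (A (v j)))) := by
        rw [neg_eq_of_add_eq_zero_right det_invariant]
    _ = (∑ j, vectorProduct d (Function.update v j (A (v j)))) i := by
        rw [Finset.mul_sum, Finset.sum_apply]
        rfl

end VectorProduct

section VectorBracket

variable {R : Type*} [CommRing R] {k : ℕ}

/-- The binary bracket `[x, y, m₁, …, m_k]` obtained from the vector product on `R ^ (k + 3)` by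
fixing all arguments but the first two. For `k = 0` and `d = 1` it is the cross product. -/
def vectorBracket (d : Fin (k + 3) → R) (m : Fin k → Fin (k + 3) → R)
    (x y : Fin (k + 3) → R) : Fin (k + 3) → R :=
  vectorProduct d (vecCons x (vecCons y m))

theorem vectorBracket_skew (d : Fin (k + 3) → R) (m : Fin k → Fin (k + 3) → R)
    (x y : Fin (k + 3) → R) : vectorBracket d m x y = -vectorBracket d m y x :=
  alternatingMap_vecCons_vecCons_swap _ x y m

theorem vectorBracket_neg_left (d : Fin (k + 3) → R) (m : Fin k → Fin (k + 3) → R)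
    (x y : Fin (k + 3) → R) : vectorBracket d m (-x) y = -vectorBracket d m x y :=
  map_neg (vectorProductAd d (vecCons y m)) x

theorem vectorBracket_leibniz (d : Fin (k + 3) → R) (m : Fin k → Fin (k + 3) → R)
    (x y z : Fin (k + 3) → R) :
    vectorBracket d m (vectorBracket d m x y) z =
      vectorBracket d m (vectorBracket d m x z) y +
        vectorBracket d m x (vectorBracket d m y z) := by
  have ad_eq_zero (j : Fin k) : vectorProductAd d (vecCons z m) (m j) = 0 :=
    (vectorProduct d).map_eq_zero_of_eq _ (i := 0) (j := j.succ.succ) rfl (Fin.succ_ne_zero _).symm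
  have ad_bracket := vectorProductAd_vectorProduct d (vecCons z m) (vecCons x (vecCons y m))
  simp only [Fin.sum_univ_succ, cons_val_zero, cons_val_succ, ad_eq_zero,
    AlternatingMap.map_update_zero, Finset.sum_const_zero, add_zero] at ad_bracket
  simp only [vecCons, Fin.update_cons_zero, ← Fin.cons_update] at ad_bracket
  exact ad_bracket

theorem vectorBracket_jacobi (d : Fin (k + 3) → R) (m : Fin k → Fin (k + 3) → R)
    (x y z : Fin (k + 3) → R) :
    vectorBracket d m (vectorBracket d m x y) z + vectorBracket d m (vectorBracket d m y z) x +
      vectorBracket d m (vectorBracket d m z x) y = 0 := by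
  rw [vectorBracket_leibniz, vectorBracket_skew d m x (vectorBracket d m y z),
    vectorBracket_skew d m z x, vectorBracket_neg_left]
  abel

end VectorBracket

theorem curry_brk {n : ℕ} (lam : Fin n × Fin 4 → ℝ) (x y : V n) (a : Fin n) :
    Function.curry (brk lam x y) a =
      vectorBracket sgn ![fun r => -lam (a, r + 2)] (Function.curry x a) (Function.curry y a) := by
  ext i
  rw [vectorBracket, vectorProduct_apply, detRowAlternating_vecCons_single, det_fin_three]
  fin_cases i <;>
  · simp only [brk, sc, sgn, Function.curry_apply, Fin.sum_univ_four, submatrix_apply, of_apply,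
      id_eq, cons_val, cons_val', cons_val_fin_one, Fin.zero_eta, Fin.mk_one, Fin.isValue,
      Fin.reduceFinMk, Fin.succAbove, Fin.reduceCastSucc, Fin.castSucc_zero, Fin.castSucc_one,
      Fin.reduceLT, Fin.reduceSucc, Fin.succ_zero_eq_one, Fin.succ_one_eq_two, ↓reduceIte,
      Fin.reduceAdd, zero_lt_one, Fin.not_lt_zero, lt_self_iff_false]
    ring

/-- the bracket of the `4n`-parametric family satisfies the
Jacobi identity, and hence makes `ℝ^{4n}` a Lie algebra. -/
theorem brk_jacobi {n : ℕ} (hn : 1 ≤ n) (lam : Fin n × Fin 4 → ℝ)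
    (x y z : V n) :
    brk lam (brk lam x y) z + brk lam (brk lam y z) x + brk lam (brk lam z x) y = 0 := by
  ext ⟨a, i⟩
  have block_jacobi := vectorBracket_jacobi sgn ![fun r => -lam (a, r + 2)]
    (Function.curry x a) (Function.curry y a) (Function.curry z a)
  simp only [← curry_brk] at block_jacobi
  exact congrFun block_jacobi i
end
end

section
/- For the 4n-parametric family of Lie brackets on ℝ^{4n}, the Norden metric g is a Killing metric, i.e. g([x,y],z) + g([x,z],y) = 0 for all x, y, z ∈ ℝ^{4n} (equivalently, g is ad-invariant). -/
noncomputable section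

/-!
Lowering the upper index of the structure constants with `g` gives in each block
`g([x, y], z) = det (w, x, y, z)`, where `w` is the covector `-g(Jλ, ·) = (λ_3̄, λ_4̄, λ_1̄, λ_2̄)`;
up to order and sign the four parameters are thus the four coordinates of a `3`-form on `ℝ⁴`. Hence
`g([x, y], z)` is alternating in all three arguments, and the Killing property is its sign change
under `y ↔ z`.
-/

theorem alternatingMap_add_swap_last {R M N : Type*} [Semiring R] [AddCommMonoid M] [Module R M]
    [AddCommMonoid N] [Module R N] (f : M [⋀^Fin 3]→ₗ[R] N) (x y z : M) :
    f ![x, y, z] + f ![x, z, y] = 0 := by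
  have swap_last : ![x, y, z] ∘ Equiv.swap 1 2 = ![x, z, y] := by
    ext i
    fin_cases i <;> rfl
  rw [← swap_last]
  exact f.map_add_swap _ (by decide)

/-- The `3`-form `det (w, ·, ·, ·)` on `ℝ⁴` with `w = (l 2, l 3, l 0, l 1)`, which is the bracket
of a block with its value lowered by the metric. The index `i + 2` is taken modulo `4`. -/
def blockForm (l : Fin 4 → ℝ) : (Fin 4 → ℝ) [⋀^Fin 3]→ₗ[ℝ] ℝ :=
  Matrix.detRowAlternating.curryLeft fun i => l (i + 2)

theorem blockForm_apply (l x y z : Fin 4 → ℝ) :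
    blockForm l ![x, y, z] = (Matrix.of ![fun i => l (i + 2), x, y, z]).det := by
  rw [blockForm, AlternatingMap.curryLeft_apply_apply]
  rfl

theorem blockForm_apply_eq_minors (l x y z : Fin 4 → ℝ) :
    blockForm l ![x, y, z] =
      l 2 * Matrix.det !![x 1, x 2, x 3; y 1, y 2, y 3; z 1, z 2, z 3] -
      l 3 * Matrix.det !![x 0, x 2, x 3; y 0, y 2, y 3; z 0, z 2, z 3] +
      l 0 * Matrix.det !![x 0, x 1, x 3; y 0, y 1, y 3; z 0, z 1, z 3] -
      l 1 * Matrix.det !![x 0, x 1, x 2; y 0, y 1, y 2; z 0, z 1, z 2] := by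
  rw [blockForm_apply, Matrix.det_succ_row_zero, Fin.sum_univ_four]
  simp [Matrix.det_fin_three, Fin.succAbove, pow_succ, sub_eq_add_neg]

theorem sum_sgn_mul_sc_eq_blockForm (l x y z : Fin 4 → ℝ) :
    ∑ t, sgn t * (∑ r, ∑ s, x r * y s * sc l r s t) * z t = blockForm l ![x, y, z] := by
  simp only [blockForm_apply_eq_minors, Matrix.det_fin_three, Fin.sum_univ_four, sgn, sc,
    Matrix.of_apply, Matrix.cons_val]
  ring

theorem gf_brk_eq_sum_blockForm {n : ℕ} (lam : Fin n × Fin 4 → ℝ) (x y z : V n) :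
    gf (brk lam x y) z =
      ∑ α, blockForm (fun r => lam (α, r))
        ![fun r => x (α, r), fun r => y (α, r), fun r => z (α, r)] := by
  simp only [gf, brk, Fintype.sum_prod_type, ← sum_sgn_mul_sc_eq_blockForm]

/-- for the `4n`-parametric family of Lie brackets on `ℝ^{4n}`,
the Norden metric `g` is a Killing metric, i.e. `g([x,y],z) + g([x,z],y) = 0`
for all `x, y, z` (equivalently, `g` is ad-invariant). -/
theorem gf_killing {n : ℕ} (hn : 1 ≤ n) (lam : Fin n × Fin 4 → ℝ)
    (x y z : V n) :
    gf (brk lam x y) z + gf (brk lam x z) y = 0 := by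
  rw [gf_brk_eq_sum_blockForm, gf_brk_eq_sum_blockForm, ← Finset.sum_add_distrib]
  exact Finset.sum_eq_zero fun α _ => alternatingMap_add_swap_last _ _ _ _
end
end

section
/- Let 𝔤 be a finite-dimensional real Lie algebra, g a symmetric bilinear form on 𝔤 that is ad-invariant (g([x,y],z) + g([x,z],y) = 0 for all x,y,z), and J a linear endomorphism of 𝔤 with J² = −id and g(Jx,Jy) = −g(x,y) for all x,y. Define F(x,y,z) = ½(g([x,Jy],z) − g([x,y],Jz)). Then the cyclic sum of F vanishes: F(x,y,z) + F(y,z,x) + F(z,x,y) = 0 for all x, y, z (the quasi-Kähler W₃-condition). -/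
section AdInvariant

variable {R L : Type*} [CommRing R] [LieRing L] [LieAlgebra R L] (g : LinearMap.BilinForm R L)

lemma bilinForm_lie_rotate (hkill : ∀ x y z : L, g ⁅x, y⁆ z + g ⁅x, z⁆ y = 0) (x y z : L) :
    g ⁅x, y⁆ z = g ⁅z, x⁆ y := by
  calc
    g ⁅x, y⁆ z = -g ⁅x, z⁆ y := eq_neg_of_add_eq_zero_left (hkill x y z)
    _ = g ⁅z, x⁆ y := by rw [← lie_skew z x, map_neg, LinearMap.neg_apply]

theorem cyclicSum_F_eq_zero_general [Invertible (2 : R)]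
    (hkill : ∀ x y z : L, g ⁅x, y⁆ z + g ⁅x, z⁆ y = 0)
    (J : L → L)
    (F : L → L → L → R)
    (hF : ∀ x y z : L, F x y z = ⅟2 * (g ⁅x, J y⁆ z - g ⁅x, y⁆ (J z)))
    (x y z : L) :
    F x y z + F y z x + F z x y = 0 := by
  -- Rotating the first term of `F a b c` gives the second term of `F c a b`,
  -- so the cyclic sum telescopes.
  have F_eq_sub_rotate (a b c : L) : F a b c = ⅟2 * (g ⁅c, a⁆ (J b) - g ⁅a, b⁆ (J c)) := by
    rw [hF, bilinForm_lie_rotate g hkill a (J b) c]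
  rw [F_eq_sub_rotate x y z, F_eq_sub_rotate y z x, F_eq_sub_rotate z x y]
  ring

end AdInvariant

/-- for a finite-dimensional real Lie algebra with an ad-invariant
(Killing) symmetric bilinear form `g` and an almost complex structure `J`
(`J² = -id`) which is an anti-isometry for `g` (so `g` is a Norden metric), the
tensor `F(x,y,z) = ½(g([x,Jy],z) − g([x,y],Jz))` has vanishing cyclic sum:
the quasi-Kähler `W₃`-condition. -/
theorem cyclicSum_F_eq_zero {L : Type*} [LieRing L] [LieAlgebra ℝ L]
    [FiniteDimensional ℝ L]
    (g : LinearMap.BilinForm ℝ L)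
    (hsymm : ∀ x y : L, g x y = g y x)
    (hkill : ∀ x y z : L, g ⁅x, y⁆ z + g ⁅x, z⁆ y = 0)
    (J : L →ₗ[ℝ] L)
    (hJ2 : ∀ x : L, J (J x) = -x)
    (hJg : ∀ x y : L, g (J x) (J y) = -g x y)
    (F : L → L → L → ℝ)
    (hF : ∀ x y z : L, F x y z = (1 / 2) * (g ⁅x, J y⁆ z - g ⁅x, y⁆ (J z))) :
    ∀ x y z : L, F x y z + F y z x + F z x y = 0 :=
  cyclicSum_F_eq_zero_general g hkill J F (by simpa only [invOf_eq_inv, one_div] using hF)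
end

section
/- Let 𝔤 be a finite-dimensional real Lie algebra, g an ad-invariant symmetric bilinear form on 𝔤, and J a linear endomorphism with J² = −id and g(Jx,Jy) = −g(x,y). Define F(x,y,z) = ½(g([x,Jy],z) − g([x,y],Jz)). Then F has the symmetries F(x,y,z) = F(x,z,y) = F(x,Jy,Jz) for all x, y, z ∈ 𝔤. -/
/-!
Fix `x`. Invariance of `g` says that `ω := g ⁅x, ·⁆ ·` is skew-symmetric, and `F x` is a multiple of
`(y, z) ↦ ω (J y) z - ω y (J z) = ω (J y) z + ω (J z) y`, which is visibly symmetric. Replacing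
`(y, z)` by `(J y, J z)` exchanges the two terms of the difference up to sign, because `J² = -1`.
-/

open LinearMap (BilinForm)

section SelfAdjointDefect

variable {R M : Type*} [CommRing R] [AddCommGroup M] [Module R M]

/-- The bilinear form `(y, z) ↦ ω (J y) z - ω y (J z)`, which measures the failure of `J` to be
self-adjoint with respect to `ω`. The tensor `F x` is half of it for `ω = g ⁅x, ·⁆ ·`. -/
def selfAdjointDefect (ω : BilinForm R M) (J : Module.End R M) : BilinForm R M :=
  ω.compLeft J - ω.compRight J

theorem selfAdjointDefect_apply (ω : BilinForm R M) (J : Module.End R M) (y z : M) :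
    selfAdjointDefect ω J y z = ω (J y) z - ω y (J z) :=
  rfl

theorem selfAdjointDefect_isSymm {ω : BilinForm R M} (hω : ∀ y z, ω y z + ω z y = 0)
    (J : Module.End R M) : (selfAdjointDefect ω J).IsSymm where
  eq y z := by
    have skew (u v : M) : ω u v = -ω v u := eq_neg_of_add_eq_zero_left (hω u v)
    calc
      selfAdjointDefect ω J y z = ω (J y) z - ω y (J z) := selfAdjointDefect_apply ω J y z
      _ = -ω z (J y) - -ω (J z) y := by rw [skew (J y) z, skew y (J z)]
      _ = ω (J z) y - ω z (J y) := neg_sub_neg _ _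
      _ = selfAdjointDefect ω J z y := (selfAdjointDefect_apply ω J z y).symm

theorem selfAdjointDefect_apply_map_map (ω : BilinForm R M) {J : Module.End R M}
    (hJ : ∀ y, J (J y) = -y) (y z : M) :
    selfAdjointDefect ω J (J y) (J z) = selfAdjointDefect ω J y z :=
  calc
    selfAdjointDefect ω J (J y) (J z) = ω (J (J y)) (J z) - ω (J y) (J (J z)) :=
      selfAdjointDefect_apply ω J (J y) (J z)
    _ = -ω y (J z) - -ω (J y) z := by simp only [hJ, map_neg, LinearMap.neg_apply]
    _ = ω (J y) z - ω y (J z) := neg_sub_neg _ _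
    _ = selfAdjointDefect ω J y z := (selfAdjointDefect_apply ω J y z).symm

end SelfAdjointDefect

theorem F_symmetries_general {R L M : Type*} [CommRing R] [LieRing L] [LieAlgebra R L]
    [AddCommGroup M] [Module R M] [LieRingModule L M] [LieModule R L M]
    (g : BilinForm R M)
    (hkill : ∀ (x : L) (y z : M), g ⁅x, y⁆ z + g ⁅x, z⁆ y = 0)
    (J : Module.End R M)
    (hJ2 : ∀ y : M, J (J y) = -y)
    (c : R)
    (F : L → M → M → R)
    (hF : ∀ x y z, F x y z = c * (g ⁅x, J y⁆ z - g ⁅x, y⁆ (J z)))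
    (x : L) (y z : M) : F x y z = F x z y ∧ F x y z = F x (J y) (J z) := by
  let ω : BilinForm R M := g.compLeft (LieModule.toEnd R L M x)
  have F_eq (u v : M) : F x u v = c * selfAdjointDefect ω J u v := hF x u v
  have defect_symm : (selfAdjointDefect ω J).IsSymm := selfAdjointDefect_isSymm (hkill x) J
  constructor
  · rw [F_eq, F_eq, defect_symm.eq z y]
  · rw [F_eq, F_eq, selfAdjointDefect_apply_map_map ω hJ2]

/-- for a finite-dimensional real Lie algebra with an ad-invariant
(Killing) symmetric bilinear form `g` and an almost complex structure `J`
(`J² = -id`) which is an anti-isometry for `g`, the tensor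
`F(x,y,z) = ½(g([x,Jy],z) − g([x,y],Jz))` has the symmetries
`F(x,y,z) = F(x,z,y) = F(x,Jy,Jz)`. -/
theorem F_symmetries {L : Type*} [LieRing L] [LieAlgebra ℝ L]
    [FiniteDimensional ℝ L]
    (g : LinearMap.BilinForm ℝ L)
    (hsymm : ∀ x y : L, g x y = g y x)
    (hkill : ∀ x y z : L, g ⁅x, y⁆ z + g ⁅x, z⁆ y = 0)
    (J : L →ₗ[ℝ] L)
    (hJ2 : ∀ x : L, J (J x) = -x)
    (hJg : ∀ x y : L, g (J x) (J y) = -g x y)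
    (F : L → L → L → ℝ)
    (hF : ∀ x y z : L, F x y z = (1 / 2) * (g ⁅x, J y⁆ z - g ⁅x, y⁆ (J z))) :
    ∀ x y z : L, F x y z = F x z y ∧ F x y z = F x (J y) (J z) :=
  F_symmetries_general g hkill J hJ2 (1 / 2) F hF
end

section
/- For the 4n-parametric family of Lie brackets on ℝ^{4n}, the Nijenhuis tensor N(x,y) = [x,y] + J[Jx,y] + J[x,Jy] − [Jx,Jy] has, for each α (writing 1̄=4α−3, 2̄=4α−2, 3̄=4α−1, 4̄=4α), the components N(X_1̄,X_2̄) = −N(X_3̄,X_4̄) = 2(λ_4̄X_1̄ − λ_3̄X_2̄ + λ_2̄X_3̄ − λ_1̄X_4̄) and N(X_1̄,X_4̄) = −N(X_2̄,X_3̄) = 2(λ_2̄X_1̄ − λ_1̄X_2̄ − λ_4̄X_3̄ + λ_3̄X_4̄); together with the antisymmetry N(X_i,X_j) = −N(X_j,X_i), all other components N(X_i,X_j) are zero (in particular N(X_1̄,X_3̄) = N(X_2̄,X_4̄) = 0 and N(X_i,X_j) = 0 whenever X_i, X_j lie in different blocks). -/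
noncomputable section

/-- The Nijenhuis tensor `N(x,y) = [x,y] + J[Jx,y] + J[x,Jy] − [Jx,Jy]`. -/
def Nt {n : ℕ} (lam : Fin n × Fin 4 → ℝ) (x y : V n) : V n :=
  brk lam x y + Jm (brk lam (Jm x) y) + Jm (brk lam x (Jm y)) -
    brk lam (Jm x) (Jm y)

/-!
For an alternating bracket and `J² = -1` the Nijenhuis tensor is antisymmetric and conjugate-linear
in each argument: `N(Jx, y) = N(x, Jy) = -J N(x, y)`; moreover `N(x, Jx) = 0`. Since each block is
spanned by `X_1̄`, `X_2̄`, `X_3̄ = J X_1̄` and `X_4̄ = J X_2̄`, the tensor on that block is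
determined by the single value `N(X_1̄, X_2̄)`. Between different blocks it vanishes because the
bracket does and `J` preserves the blocks.
-/

section Nijenhuis

variable {R M : Type*} [CommRing R] [AddCommGroup M] [Module R M]

/-- The Nijenhuis tensor of a linear endomorphism `J` with respect to a bilinear bracket `B`,
normalized for `J² = -1`: the usual `[Jx, Jy] - J[Jx, y] - J[x, Jy] + J²[x, y]` is taken with the
opposite sign and `J²` replaced by `-1`. -/
def nijenhuis (B : M →ₗ[R] M →ₗ[R] M) (J : M →ₗ[R] M) (x y : M) : M :=
  B x y + J (B (J x) y) + J (B x (J y)) - B (J x) (J y)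

variable {B : M →ₗ[R] M →ₗ[R] M} {J : M →ₗ[R] M}

theorem nijenhuis_swap (hB : B.IsAlt) (x y : M) :
    nijenhuis B J x y = -nijenhuis B J y x := by
  simp only [nijenhuis, ← hB.neg x, ← hB.neg (J x), map_neg]
  abel

theorem nijenhuis_map_left (hJ : ∀ x, J (J x) = -x) (x y : M) :
    nijenhuis B J (J x) y = -J (nijenhuis B J x y) := by
  simp only [nijenhuis, hJ, map_neg, map_add, map_sub, LinearMap.neg_apply]
  abel

theorem nijenhuis_map_right (hJ : ∀ x, J (J x) = -x) (x y : M) :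
    nijenhuis B J x (J y) = -J (nijenhuis B J x y) := by
  simp only [nijenhuis, hJ, map_neg, map_add, map_sub]
  abel

theorem nijenhuis_map_map (hJ : ∀ x, J (J x) = -x) (x y : M) :
    nijenhuis B J (J x) (J y) = -nijenhuis B J x y := by
  rw [nijenhuis_map_left hJ, nijenhuis_map_right hJ, map_neg, hJ, neg_neg]

theorem nijenhuis_self_map (hB : B.IsAlt) (hJ : ∀ x, J (J x) = -x) (x : M) :
    nijenhuis B J x (J x) = 0 := by
  simp only [nijenhuis, hJ, map_neg, hB.self_eq_zero, map_zero, ← hB.neg x (J x)]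
  abel

end Nijenhuis

theorem sc_swap (l : Fin 4 → ℝ) (r s k : Fin 4) : sc l r s k = -sc l s r k := by
  fin_cases r <;> fin_cases s <;> fin_cases k <;> simp [sc]

section Blocks

variable {n : ℕ} (lam : Fin n × Fin 4 → ℝ)

theorem brk_swap (x y : V n) : brk lam x y = -brk lam y x := by
  ext p
  simp only [brk, Pi.neg_apply, ← Finset.sum_neg_distrib]
  rw [Finset.sum_comm]
  refine Finset.sum_congr rfl fun s _ => Finset.sum_congr rfl fun r _ => ?_
  rw [sc_swap]
  ring

/-- The bracket `brk lam` as a bilinear map, to which the facts on `nijenhuis` apply. -/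
def brkLinear : V n →ₗ[ℝ] V n →ₗ[ℝ] V n :=
  LinearMap.mk₂ ℝ (brk lam)
    (fun x x' y => by ext p; simp [brk, add_mul, Finset.sum_add_distrib])
    (fun c x y => by ext p; simp [brk, mul_assoc, Finset.mul_sum])
    (fun x y y' => by ext p; simp [brk, mul_add, add_mul, Finset.sum_add_distrib])
    (fun c x y => by ext p; simp [brk, mul_assoc, mul_left_comm, Finset.mul_sum])

theorem isAlt_brkLinear : (brkLinear lam).IsAlt :=
  fun x => self_eq_neg.mp (brk_swap lam x x)

theorem Jm_add (x y : V n) : Jm (x + y) = Jm x + Jm y := by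
  ext ⟨α, k⟩
  fin_cases k <;> simp [Jm, add_comm]

theorem Jm_smul (c : ℝ) (x : V n) : Jm (c • x) = c • Jm x := by
  ext ⟨α, k⟩
  fin_cases k <;> simp [Jm]

/-- The almost complex structure `Jm` as a linear map, to which the facts on `nijenhuis` apply. -/
def JmLinear : V n →ₗ[ℝ] V n where
  toFun := Jm
  map_add' := Jm_add
  map_smul' := Jm_smul

theorem Jm_zero : Jm (0 : V n) = 0 :=
  map_zero JmLinear

theorem Jm_sub (x y : V n) : Jm (x - y) = Jm x - Jm y :=
  map_sub JmLinear x y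

theorem Jm_Jm (x : V n) : Jm (Jm x) = -x := by
  ext ⟨α, k⟩
  fin_cases k <;> simp [Jm]

theorem Nt_swap (x y : V n) : Nt lam x y = -Nt lam y x :=
  nijenhuis_swap (J := JmLinear) (isAlt_brkLinear lam) x y

theorem Nt_Jm_left (x y : V n) : Nt lam (Jm x) y = -Jm (Nt lam x y) :=
  nijenhuis_map_left (B := brkLinear lam) (J := JmLinear) Jm_Jm x y

theorem Nt_Jm_right (x y : V n) : Nt lam x (Jm y) = -Jm (Nt lam x y) :=
  nijenhuis_map_right (B := brkLinear lam) (J := JmLinear) Jm_Jm x y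

theorem Nt_Jm_Jm (x y : V n) : Nt lam (Jm x) (Jm y) = -Nt lam x y :=
  nijenhuis_map_map (B := brkLinear lam) (J := JmLinear) Jm_Jm x y

theorem Nt_self_Jm (x : V n) : Nt lam x (Jm x) = 0 :=
  nijenhuis_self_map (J := JmLinear) (isAlt_brkLinear lam) Jm_Jm x

theorem brk_eq_zero_of_disjoint_blocks {x y : V n}
    (h : ∀ α, x.curry α = 0 ∨ y.curry α = 0) : brk lam x y = 0 := by
  ext ⟨α, k⟩
  refine Finset.sum_eq_zero fun r _ => Finset.sum_eq_zero fun s _ => ?_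
  rcases h α with hx | hy
  · have hxr : x (α, r) = 0 := congrFun hx r
    simp [hxr]
  · have hys : y (α, s) = 0 := congrFun hy s
    simp [hys]

theorem curry_Jm_eq_zero {x : V n} {α : Fin n} (h : x.curry α = 0) : (Jm x).curry α = 0 := by
  have hx (r : Fin 4) : x (α, r) = 0 := congrFun h r
  ext k
  fin_cases k <;> simp [Jm, hx]

theorem Nt_eq_zero_of_disjoint_blocks {x y : V n}
    (h : ∀ α, x.curry α = 0 ∨ y.curry α = 0) : Nt lam x y = 0 := by
  have hxy : brk lam x y = 0 := brk_eq_zero_of_disjoint_blocks lam h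
  have hJxy : brk lam (Jm x) y = 0 :=
    brk_eq_zero_of_disjoint_blocks lam fun α => (h α).imp_left curry_Jm_eq_zero
  have hxJy : brk lam x (Jm y) = 0 :=
    brk_eq_zero_of_disjoint_blocks lam fun α => (h α).imp_right curry_Jm_eq_zero
  have hJxJy : brk lam (Jm x) (Jm y) = 0 :=
    brk_eq_zero_of_disjoint_blocks lam fun α => (h α).imp curry_Jm_eq_zero curry_Jm_eq_zero
  simp only [Nt, hxy, hJxy, hxJy, hJxJy, Jm_zero, add_zero, sub_zero]

theorem curry_X_eq_zero {i : Fin n × Fin 4} {α : Fin n} (h : α ≠ i.1) :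
    (X i : V n).curry α = 0 := by
  ext r
  exact if_neg fun hi => h (congrArg Prod.fst hi)

theorem Nt_X_X_of_ne {i j : Fin n × Fin 4} (hij : i.1 ≠ j.1) : Nt lam (X i) (X j) = 0 :=
  Nt_eq_zero_of_disjoint_blocks lam fun α => by
    rcases ne_or_eq α i.1 with hα | rfl
    · exact .inl (curry_X_eq_zero hα)
    · exact .inr (curry_X_eq_zero hij)

theorem Jm_X_zero (α : Fin n) : Jm (X (α, 0)) = X (α, 2) := by
  ext ⟨β, k⟩
  fin_cases k <;> simp [Jm, X]

theorem Jm_X_one (α : Fin n) : Jm (X (α, 1)) = X (α, 3) := by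
  ext ⟨β, k⟩
  fin_cases k <;> simp [Jm, X]

theorem Jm_X_two (α : Fin n) : Jm (X (α, 2)) = -X (α, 0) := by
  rw [← Jm_X_zero, Jm_Jm]

theorem Jm_X_three (α : Fin n) : Jm (X (α, 3)) = -X (α, 1) := by
  rw [← Jm_X_one, Jm_Jm]

theorem brk_X_X (α : Fin n) (r s : Fin 4) :
    brk lam (X (α, r)) (X (α, s)) = ∑ k, sc (fun t => lam (α, t)) r s k • X (α, k) := by
  ext ⟨β, k⟩
  by_cases hβ : β = α <;> simp [brk, X, hβ, Finset.sum_apply]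

theorem Nt_X_zero_one (α : Fin n) :
    Nt lam (X (α, 0)) (X (α, 1)) =
      (2 : ℝ) • (lam (α, 3) • X (α, 0) - lam (α, 2) • X (α, 1) +
        lam (α, 1) • X (α, 2) - lam (α, 0) • X (α, 3)) := by
  have h01 : brk lam (X (α, 0)) (X (α, 1)) = lam (α, 1) • X (α, 2) - lam (α, 0) • X (α, 3) := by
    simp only [brk_X_X, Fin.sum_univ_four, sc, Matrix.cons_val]
    module
  have h21 : brk lam (X (α, 2)) (X (α, 1)) = lam (α, 1) • X (α, 0) + lam (α, 2) • X (α, 3) := by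
    simp only [brk_X_X, Fin.sum_univ_four, sc, Matrix.cons_val]
    module
  have h03 : brk lam (X (α, 0)) (X (α, 3)) = -lam (α, 0) • X (α, 1) - lam (α, 3) • X (α, 2) := by
    simp only [brk_X_X, Fin.sum_univ_four, sc, Matrix.cons_val]
    module
  have h23 : brk lam (X (α, 2)) (X (α, 3)) = -lam (α, 3) • X (α, 0) + lam (α, 2) • X (α, 1) := by
    simp only [brk_X_X, Fin.sum_univ_four, sc, Matrix.cons_val]
    module
  simp only [Nt, Jm_X_zero, Jm_X_one, h01, h21, h03, h23, Jm_add, Jm_sub, Jm_smul, Jm_X_two,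
    Jm_X_three]
  module

theorem Nt_X_two_three (α : Fin n) :
    Nt lam (X (α, 2)) (X (α, 3)) = -Nt lam (X (α, 0)) (X (α, 1)) := by
  rw [← Jm_X_zero, ← Jm_X_one, Nt_Jm_Jm]

theorem Nt_X_zero_three (α : Fin n) :
    Nt lam (X (α, 0)) (X (α, 3)) =
      (2 : ℝ) • (lam (α, 1) • X (α, 0) - lam (α, 0) • X (α, 1) -
        lam (α, 3) • X (α, 2) + lam (α, 2) • X (α, 3)) := by
  rw [← Jm_X_one, Nt_Jm_right, Nt_X_zero_one]
  simp only [Jm_add, Jm_sub, Jm_smul, Jm_X_zero, Jm_X_one, Jm_X_two, Jm_X_three]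
  module

theorem Nt_X_one_two (α : Fin n) :
    Nt lam (X (α, 1)) (X (α, 2)) = -Nt lam (X (α, 0)) (X (α, 3)) :=
  calc Nt lam (X (α, 1)) (X (α, 2))
      = -Nt lam (X (α, 2)) (X (α, 1)) := Nt_swap lam _ _
    _ = Jm (Nt lam (X (α, 0)) (X (α, 1))) := by rw [← Jm_X_zero, Nt_Jm_left, neg_neg]
    _ = -Nt lam (X (α, 0)) (X (α, 3)) := by rw [← Jm_X_one, Nt_Jm_right, neg_neg]

theorem Nt_X_zero_two (α : Fin n) : Nt lam (X (α, 0)) (X (α, 2)) = 0 := by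
  rw [← Jm_X_zero, Nt_self_Jm]

theorem Nt_X_one_three (α : Fin n) : Nt lam (X (α, 1)) (X (α, 3)) = 0 := by
  rw [← Jm_X_one, Nt_self_Jm]

end Blocks

/-- the components of the Nijenhuis tensor on the basis vectors:
`N(X_1̄,X_2̄) = −N(X_3̄,X_4̄) = 2(λ_4̄X_1̄ − λ_3̄X_2̄ + λ_2̄X_3̄ − λ_1̄X_4̄)`,
`N(X_1̄,X_4̄) = −N(X_2̄,X_3̄) = 2(λ_2̄X_1̄ − λ_1̄X_2̄ − λ_4̄X_3̄ + λ_3̄X_4̄)`;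
together with the antisymmetry `N(X_i,X_j) = −N(X_j,X_i)`, all other
components vanish: `N(X_1̄,X_3̄) = N(X_2̄,X_4̄) = 0` and `N(X_i,X_j) = 0`
whenever `X_i`, `X_j` lie in different blocks. -/
theorem Nt_components {n : ℕ} (hn : 1 ≤ n) (lam : Fin n × Fin 4 → ℝ) :
    (∀ i j : Fin n × Fin 4, Nt lam (X i) (X j) = -Nt lam (X j) (X i)) ∧
    (∀ α : Fin n,
      Nt lam (X (α, 0)) (X (α, 1)) =
        (2 : ℝ) • (lam (α, 3) • X (α, 0) - lam (α, 2) • X (α, 1) +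
          lam (α, 1) • X (α, 2) - lam (α, 0) • X (α, 3)) ∧
      Nt lam (X (α, 2)) (X (α, 3)) =
        -((2 : ℝ) • (lam (α, 3) • X (α, 0) - lam (α, 2) • X (α, 1) +
          lam (α, 1) • X (α, 2) - lam (α, 0) • X (α, 3))) ∧
      Nt lam (X (α, 0)) (X (α, 3)) =
        (2 : ℝ) • (lam (α, 1) • X (α, 0) - lam (α, 0) • X (α, 1) -
          lam (α, 3) • X (α, 2) + lam (α, 2) • X (α, 3)) ∧
      Nt lam (X (α, 1)) (X (α, 2)) =
        -((2 : ℝ) • (lam (α, 1) • X (α, 0) - lam (α, 0) • X (α, 1) -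
          lam (α, 3) • X (α, 2) + lam (α, 2) • X (α, 3))) ∧
      Nt lam (X (α, 0)) (X (α, 2)) = 0 ∧
      Nt lam (X (α, 1)) (X (α, 3)) = 0) ∧
    (∀ i j : Fin n × Fin 4, i.1 ≠ j.1 → Nt lam (X i) (X j) = 0) := by
  refine ⟨fun i j => Nt_swap lam (X i) (X j), fun α => ⟨Nt_X_zero_one lam α, ?_,
    Nt_X_zero_three lam α, ?_, Nt_X_zero_two lam α, Nt_X_one_three lam α⟩,
    fun i j hij => Nt_X_X_of_ne lam hij⟩
  · rw [Nt_X_two_three, Nt_X_zero_one]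
  · rw [Nt_X_one_two, Nt_X_zero_three]
end
end
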